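/- Overlap formula in the factorized space (part of Schwinger's factorization theorem): let N₁, N₂ be positive integers with gcd(N₁, N₂) = 1, N = N₁ · N₂, and let r₁, r₂ be integers with r₁·N₂ + r₂·N₁ ≡ 1 (mod N). Define u_j ∈ ℂ^{ZMod N₁ × ZMod N₂} for j ∈ ZMod N by u_j = e_{j mod N₁} ⊗ e_{j mod N₂}, let v₀ be the uniform vector with all components 1/√N, set U = U₁^{r₁} ⊗ U₂^{r₂}, and define v_k = U^k v₀ for k ∈ ZMod N. Then for all j, k ∈ ZMod N the inner product satisfies ⟨u_j, v_k⟩ = exp(2πi·jk/N)/√N; in particular (v_k)_{k ∈ ZMod N} is an orthonormal basis of ℂ^{ZMod N₁ × ZMod N₂}. -/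

import Mathlib

/-!
The clock matrices are diagonal, with the values of the standard additive characters
`ψ_m : a ↦ exp (2πi a / m)` of `ZMod m` as entries. Hence, at the point `(j mod N₁, j mod N₂)`,
the vector `v_k` takes the value `(ψ_{N₁} (r₁ j) * ψ_{N₂} (r₂ j)) ^ k / √N`. Adding fractions gives
`ψ_{N₁} a * ψ_{N₂} b = ψ_N (a N₂ + b N₁)`, so by the choice of `r₁, r₂` this value is
`ψ_N (j k) / √N`. By the Chinese remainder theorem these are all the entries of `v_k`, and the
orthogonality relations for the primitive character `ψ_N` make the `v_k` orthonormal.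
-/

open Matrix ZMod
open scoped Kronecker

theorem diagonal_zpow {n K : Type*} [Fintype n] [DecidableEq n] [Field K] {d : n → K}
    (hd : ∀ i, d i ≠ 0) (r : ℤ) : diagonal d ^ r = diagonal fun i ↦ d i ^ r := by
  cases r with
  | ofNat m =>
    simp only [Int.ofNat_eq_natCast, zpow_natCast, diagonal_pow, Pi.pow_def]
  | negSucc m =>
    rw [zpow_negSucc, diagonal_pow]
    refine inv_eq_left_inv ?_
    simp [diagonal_mul_diagonal, zpow_negSucc, hd]

theorem stdAddChar_intCast_mul_stdAddChar_intCast (M N : ℕ) [NeZero M] [NeZero N] (a b : ℤ) :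
    stdAddChar (a : ZMod M) * stdAddChar (b : ZMod N) =
      stdAddChar ((a * N + b * M : ℤ) : ZMod (M * N)) := by
  have hM : (M : ℂ) ≠ 0 := NeZero.ne _
  have hN : (N : ℂ) ≠ 0 := NeZero.ne _
  rw [stdAddChar_coe, stdAddChar_coe, stdAddChar_coe, ← Complex.exp_add]
  congr 1
  push_cast
  field_simp

theorem stdAddChar_eq_exp_pow_val {N : ℕ} [NeZero N] (a : ZMod N) :
    stdAddChar a = Complex.exp (2 * Real.pi * Complex.I / N) ^ a.val := by
  rw [stdAddChar_apply, toCircle_apply, ← Complex.exp_nat_mul]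
  congr 1
  ring

theorem stdAddChar_mul_eq_exp {N : ℕ} [NeZero N] (j k : ZMod N) :
    stdAddChar (j * k) =
      Complex.exp (2 * Real.pi * Complex.I * (j.val * k.val) / N) := by
  simpa using stdAddChar_coe (N := N) (j.val * k.val)

theorem orthonormal_of_apply_eq_addChar_div_sqrt_card {𝕜 R ι : Type*} [RCLike 𝕜] [CommRing R]
    [Fintype R] [Fintype ι] {ψ : AddChar R 𝕜} (hψ : ψ.IsPrimitive) (e : R ≃ ι)
    {w : R → EuclideanSpace 𝕜 ι}
    (hw : ∀ j k, w k (e j) = ψ (j * k) / √(Fintype.card R : ℝ)) : Orthonormal 𝕜 w := by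
  classical
  have card_ne_zero : (Fintype.card R : 𝕜) ≠ 0 := Nat.cast_ne_zero.2 Fintype.card_ne_zero
  have sqrt_mul_sqrt :
      (√(Fintype.card R : ℝ) : 𝕜) * √(Fintype.card R : ℝ) = Fintype.card R := by
    rw [← RCLike.ofReal_mul, Real.mul_self_sqrt (Nat.cast_nonneg _), RCLike.ofReal_natCast]
  have inner_entries (k l j : R) :
      inner 𝕜 (w k (e j)) (w l (e j)) = ψ (j * (l - k)) / Fintype.card R := by
    rw [hw, hw, RCLike.inner_apply, map_div₀, RCLike.conj_ofReal, ← AddChar.map_neg_eq_conj,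
      div_mul_div_comm, sqrt_mul_sqrt, ← AddChar.map_add_eq_mul, mul_sub, sub_eq_add_neg]
  rw [orthonormal_iff_ite]
  intro k l
  calc inner 𝕜 (w k) (w l) = ∑ j, ψ (j * (l - k)) / Fintype.card R := by
        rw [PiLp.inner_apply, ← e.sum_comp]
        exact Finset.sum_congr rfl fun j _ ↦ inner_entries k l j
    _ = (if l - k = 0 then (Fintype.card R : 𝕜) else 0) / Fintype.card R := by
        rw [← Finset.sum_div, AddChar.sum_mulShift _ hψ, Nat.cast_ite, Nat.cast_zero]
    _ = if k = l then 1 else 0 := by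
        rw [ite_div, div_self card_ne_zero, zero_div]
        simp only [sub_eq_zero, eq_comm]

/-- The clock matrix `diag(1, ω, …, ω ^ (N - 1))` with `ω = exp (2πi / N)`, encoded through the
standard additive character `a ↦ ω ^ a` so that the character calculus applies to its powers. -/
noncomputable def clockMatrix (N : ℕ) [NeZero N] : Matrix (ZMod N) (ZMod N) ℂ :=
  diagonal stdAddChar

theorem clockMatrix_apply {N : ℕ} [NeZero N] (a b : ZMod N) :
    clockMatrix N a b =
      if a = b then Complex.exp (2 * Real.pi * Complex.I / N) ^ a.val else 0 := by
  rw [clockMatrix, diagonal_apply, stdAddChar_eq_exp_pow_val]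

theorem clockMatrix_zpow (N : ℕ) [NeZero N] (r : ℤ) :
    clockMatrix N ^ r = diagonal fun a ↦ stdAddChar (r • a) := by
  rw [clockMatrix, diagonal_zpow fun a ↦ (stdAddChar.val_isUnit a).ne_zero]
  simp only [AddChar.map_zsmul_eq_zpow]

section Factorization

variable {N₁ N₂ : ℕ}

theorem chineseRemainder_apply_eq_natCast_val [NeZero (N₁ * N₂)] (h : N₁.Coprime N₂)
    (j : ZMod (N₁ * N₂)) :
    chineseRemainder h j = ((j.val : ZMod N₁), (j.val : ZMod N₂)) := by
  conv_lhs => rw [← natCast_zmod_val j, map_natCast]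
  rfl

variable [NeZero N₁] [NeZero N₂]

theorem stdAddChar_zsmul_chineseRemainder (h : N₁.Coprime N₂) {r₁ r₂ : ℤ}
    (hr : r₁ * N₂ + r₂ * N₁ ≡ 1 [ZMOD ((N₁ : ℤ) * N₂)]) (j : ZMod (N₁ * N₂)) :
    stdAddChar (r₁ • (chineseRemainder h j).1) * stdAddChar (r₂ • (chineseRemainder h j).2) =
      stdAddChar j := by
  have bezout : (r₁ * N₂ + r₂ * N₁ : ZMod (N₁ * N₂)) = 1 := by
    exact_mod_cast (intCast_eq_intCast_iff _ 1 (N₁ * N₂)).2 (by exact_mod_cast hr)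
  calc
    _ = stdAddChar ((r₁ * j.val : ℤ) : ZMod N₁) * stdAddChar ((r₂ * j.val : ℤ) : ZMod N₂) := by
      simp [chineseRemainder_apply_eq_natCast_val]
    _ = stdAddChar ((r₁ * j.val * N₂ + r₂ * j.val * N₁ : ℤ) : ZMod (N₁ * N₂)) :=
      stdAddChar_intCast_mul_stdAddChar_intCast ..
    _ = stdAddChar j := by
      congr 1
      push_cast [natCast_zmod_val]
      linear_combination j * bezout

theorem toEuclideanLin_clockMatrix_kronecker_pow_apply (r₁ r₂ : ℤ) (k : ℕ)
    (x : EuclideanSpace ℂ (ZMod N₁ × ZMod N₂)) (p : ZMod N₁ × ZMod N₂) :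
    toEuclideanLin (((clockMatrix N₁ ^ r₁) ⊗ₖ (clockMatrix N₂ ^ r₂)) ^ k) x p =
      (stdAddChar (r₁ • p.1) * stdAddChar (r₂ • p.2)) ^ k * x p := by
  rw [clockMatrix_zpow, clockMatrix_zpow, diagonal_kronecker_diagonal, diagonal_pow,
    toLpLin_apply, PiLp.toLp_apply, mulVec_diagonal, Pi.pow_apply]

theorem toEuclideanLin_clockMatrix_kronecker_pow_apply_chineseRemainder (h : N₁.Coprime N₂)
    {r₁ r₂ : ℤ} (hr : r₁ * N₂ + r₂ * N₁ ≡ 1 [ZMOD ((N₁ : ℤ) * N₂)])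
    (x : EuclideanSpace ℂ (ZMod N₁ × ZMod N₂)) (j k : ZMod (N₁ * N₂)) :
    toEuclideanLin (((clockMatrix N₁ ^ r₁) ⊗ₖ (clockMatrix N₂ ^ r₂)) ^ k.val) x
        (chineseRemainder h j) =
      stdAddChar (j * k) * x (chineseRemainder h j) := by
  rw [toEuclideanLin_clockMatrix_kronecker_pow_apply, stdAddChar_zsmul_chineseRemainder h hr,
    ← AddChar.map_nsmul_eq_pow, nsmul_eq_mul, natCast_zmod_val, mul_comm k]

end Factorization

open Kronecker in
open scoped ComplexInnerProductSpace in
/-- Overlap formula in the factorized space: with `u_j = e_{j mod N₁} ⊗ e_{j mod N₂}`,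
`v₀` the uniform vector, `U = U₁^{r₁} ⊗ U₂^{r₂}` and `v_k = U^k v₀`, one has
`⟨u_j, v_k⟩ = exp(2πi·jk/N)/√N`; in particular the `v_k` form an orthonormal basis. -/
theorem factorized_overlap_formula (N₁ N₂ : ℕ) [NeZero N₁] [NeZero N₂]
    (hcop : Nat.gcd N₁ N₂ = 1)
    (r₁ r₂ : ℤ)
    (hr : r₁ * N₂ + r₂ * N₁ ≡ 1 [ZMOD ((N₁ : ℤ) * N₂)])
    (U₁ : Matrix (ZMod N₁) (ZMod N₁) ℂ)
    (hU₁ : ∀ a b : ZMod N₁,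
      U₁ a b = if a = b then Complex.exp (2 * Real.pi * Complex.I / N₁) ^ a.val else 0)
    (U₂ : Matrix (ZMod N₂) (ZMod N₂) ℂ)
    (hU₂ : ∀ a b : ZMod N₂,
      U₂ a b = if a = b then Complex.exp (2 * Real.pi * Complex.I / N₂) ^ a.val else 0)
    (u : ZMod (N₁ * N₂) → EuclideanSpace ℂ (ZMod N₁ × ZMod N₂))
    (hu : ∀ (j : ZMod (N₁ * N₂)) (p : ZMod N₁ × ZMod N₂),
      u j p = if p.1 = (j.val : ZMod N₁) ∧ p.2 = (j.val : ZMod N₂) then 1 else 0)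
    (v₀ : EuclideanSpace ℂ (ZMod N₁ × ZMod N₂))
    (hv₀ : ∀ p : ZMod N₁ × ZMod N₂, v₀ p = 1 / Real.sqrt (N₁ * N₂))
    (v : ZMod (N₁ * N₂) → EuclideanSpace ℂ (ZMod N₁ × ZMod N₂))
    (hv : ∀ k : ZMod (N₁ * N₂),
      v k = Matrix.toEuclideanLin (((U₁ ^ r₁) ⊗ₖ (U₂ ^ r₂)) ^ k.val) v₀) :
    (∀ j k : ZMod (N₁ * N₂),
      (⟪u j, v k⟫ : ℂ) =
        Complex.exp (2 * Real.pi * Complex.I * (j.val * k.val) / (N₁ * N₂ : ℕ)) /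
          Real.sqrt (N₁ * N₂)) ∧
    Orthonormal ℂ v ∧ Submodule.span ℂ (Set.range v) = ⊤ := by
  obtain rfl : U₁ = clockMatrix N₁ := by
    ext a b
    rw [hU₁, clockMatrix_apply]
  obtain rfl : U₂ = clockMatrix N₂ := by
    ext a b
    rw [hU₂, clockMatrix_apply]
  have u_eq_single (j) : u j = EuclideanSpace.single (chineseRemainder hcop j) 1 := by
    ext p
    simp [hu, chineseRemainder_apply_eq_natCast_val, Prod.ext_iff]
  have v_apply (j k) : v k (chineseRemainder hcop j) =
      stdAddChar (j * k) / Real.sqrt (N₁ * N₂) := by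
    rw [hv, toEuclideanLin_clockMatrix_kronecker_pow_apply_chineseRemainder hcop hr, hv₀,
      mul_one_div]
  have v_orthonormal : Orthonormal ℂ v :=
    orthonormal_of_apply_eq_addChar_div_sqrt_card (isPrimitive_stdAddChar _)
      (chineseRemainder hcop).toEquiv fun j k ↦ by simpa [ZMod.card] using v_apply j k
  refine ⟨fun j k ↦ ?_, v_orthonormal, ?_⟩
  · rw [u_eq_single, EuclideanSpace.inner_single_left, map_one, one_mul, v_apply,
      stdAddChar_mul_eq_exp]
  · exact v_orthonormal.linearIndependent.span_eq_top_of_card_eq_finrank' (by simp [ZMod.card])
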